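/- (Isotonic calibration normalizes inverse-probability weights.) Let N ≥ 1, d : Fin N → ℝ with d i ∈ {0,1} for all i, and let v : Fin N → ℝ be a nondecreasing vector minimizing Σ_{i} (d i − v i)² over all nondecreasing vectors, and suppose 0 < v i < 1 for all i. Then Σ_{i} d i / v i = N and Σ_{i} (1 − d i) / (1 − v i) = N; i.e. the inverse propensity weights built from the isotonically calibrated scores sum exactly to the sample size in both the treated and the control group. -/

import Mathlib

open scoped BigOperators

/-!
The residual `d - v` of an isotonic regression `v` of `d` is orthogonal to every function `φ(v)` of
the fit: distinct values of `v` are separated by a positive gap, so `v + t φ(v)` is still monotone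
for all small `t` of either sign. Hence the squared loss along this line has a local minimum at
`t = 0`, and its derivative there, `-2 ∑ (dᵢ - vᵢ) φ(vᵢ)`, vanishes. Taking `φ(x) = 1 / (x - c)`
with `c = 0` and `c = 1` gives the two normalizations.
-/

open Filter Topology

theorem eventually_strictMonoOn_of_tendsto {X α β : Type*} [Preorder α] [LinearOrder β]
    [TopologicalSpace β] [OrderClosedTopology β] {l : Filter X} {f : X → α → β} {g : α → β}
    {s : Set α} (hs : s.Finite) (hg : StrictMonoOn g s)
    (hf : ∀ a ∈ s, Tendsto (fun x ↦ f x a) l (𝓝 (g a))) :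
    ∀ᶠ x in l, StrictMonoOn (f x) s := by
  have hpair : ∀ᶠ x in l, ∀ a ∈ s, ∀ b ∈ s, a < b → f x a < f x b :=
    hs.eventually_all.2 fun a ha ↦ hs.eventually_all.2 fun b hb ↦
      eventually_imp_distrib_left.2 fun hab ↦ (hf a ha).eventually_lt (hf b hb) (hg ha hb hab)
  exact hpair.mono fun x hx a ha b hb ↦ hx a ha b hb

theorem eventually_monotone_add_mul_comp {ι : Type*} [Preorder ι] {v : ι → ℝ}
    (hfin : (Set.range v).Finite) (hv : Monotone v) (φ : ℝ → ℝ) :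
    ∀ᶠ t : ℝ in 𝓝 0, Monotone fun i ↦ v i + t * φ (v i) := by
  have hlim (x : ℝ) : Tendsto (fun t : ℝ ↦ x + t * φ x) (𝓝 0) (𝓝 x) :=
    Continuous.tendsto' (by fun_prop) _ _ (by simp)
  filter_upwards [eventually_strictMonoOn_of_tendsto hfin strictMonoOn_id fun x _ ↦ hlim x]
    with t ht i j hij
  exact ht.monotoneOn ⟨i, rfl⟩ ⟨j, rfl⟩ (hv hij)

theorem hasDerivAt_sum_sub_mul_sq {ι : Type*} (s : Finset ι) (r g : ι → ℝ) (t : ℝ) :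
    HasDerivAt (fun t : ℝ ↦ ∑ i ∈ s, (r i - t * g i) ^ 2)
      (-2 * ∑ i ∈ s, (r i - t * g i) * g i) t := by
  have hterm (i : ι) : HasDerivAt (fun t : ℝ ↦ (r i - t * g i) ^ 2)
      (-2 * ((r i - t * g i) * g i)) t :=
    (((hasDerivAt_mul_const (g i)).const_sub (r i)).fun_pow 2).congr_deriv (by ring)
  rw [Finset.mul_sum]
  exact HasDerivAt.fun_sum fun i _ ↦ hterm i

/-- `v` is an isotonic regression of `d`: a least-squares fit of `d` among the monotone functions.
The index set may carry any preorder; `Fin N` is the case of vectors with nondecreasing entries. -/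
structure IsIsotonicRegression {ι : Type*} [Fintype ι] [Preorder ι] (d v : ι → ℝ) : Prop where
  monotone : Monotone v
  sum_sq_sub_le : ∀ w : ι → ℝ, Monotone w → ∑ i, (d i - v i) ^ 2 ≤ ∑ i, (d i - w i) ^ 2

section IsotonicRegression

variable {ι : Type*} [Fintype ι] [Preorder ι] {d v : ι → ℝ}

theorem IsIsotonicRegression.sum_sub_mul_comp_eq_zero (h : IsIsotonicRegression d v)
    (φ : ℝ → ℝ) : ∑ i, (d i - v i) * φ (v i) = 0 := by
  have hmin : IsLocalMin (fun t : ℝ ↦ ∑ i, (d i - v i - t * φ (v i)) ^ 2) 0 := by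
    filter_upwards [eventually_monotone_add_mul_comp (Set.finite_range v) h.monotone φ] with t ht
    simpa only [zero_mul, sub_zero, sub_sub] using h.sum_sq_sub_le _ ht
  have hderiv : -2 * ∑ i, (d i - v i - 0 * φ (v i)) * φ (v i) = 0 :=
    hmin.hasDerivAt_eq_zero (hasDerivAt_sum_sub_mul_sq _ _ _ 0)
  simpa using hderiv

theorem IsIsotonicRegression.sum_sub_div_sub_eq_card (h : IsIsotonicRegression d v) {c : ℝ}
    (hc : ∀ i, v i ≠ c) : ∑ i, (d i - c) / (v i - c) = Fintype.card ι :=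
  calc ∑ i, (d i - c) / (v i - c)
      = ∑ i, ((d i - v i) * (v i - c)⁻¹ + 1) := Finset.sum_congr rfl fun i _ ↦ by
        have := sub_ne_zero.2 (hc i)
        field_simp
        ring
    _ = ∑ i, (d i - v i) * (v i - c)⁻¹ + Fintype.card ι := by simp [Finset.sum_add_distrib]
    _ = Fintype.card ι := by rw [h.sum_sub_mul_comp_eq_zero fun x ↦ (x - c)⁻¹, zero_add]

theorem isotonic_regression_normalizes_weights_general (h : IsIsotonicRegression d v)
    (hv0 : ∀ i, v i ≠ 0) (hv1 : ∀ i, v i ≠ 1) :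
    ∑ i, d i / v i = Fintype.card ι ∧ ∑ i, (1 - d i) / (1 - v i) = Fintype.card ι := by
  constructor
  · simpa only [sub_zero] using h.sum_sub_div_sub_eq_card hv0
  · rw [← h.sum_sub_div_sub_eq_card hv1]
    refine Finset.sum_congr rfl fun i _ ↦ ?_
    rw [← neg_div_neg_eq, neg_sub, neg_sub]

end IsotonicRegression

/-- Isotonic calibration normalizes inverse-probability weights: if `v` is the isotonic
regression of binary labels `d` and `0 < v i < 1` for all `i`, then the inverse propensity
weights sum exactly to the sample size in both the treated and the control group. -/
theorem isotonic_regression_normalizes_weights (N : ℕ) (hN : 1 ≤ N) (d v : Fin N → ℝ)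
    (hd01 : ∀ i, d i = 0 ∨ d i = 1)
    (hmono : Monotone v)
    (hmin : ∀ w : Fin N → ℝ, Monotone w →
      ∑ i, (d i - v i) ^ 2 ≤ ∑ i, (d i - w i) ^ 2)
    (hv0 : ∀ i, 0 < v i) (hv1 : ∀ i, v i < 1) :
    ∑ i, d i / v i = (N : ℝ) ∧ ∑ i, (1 - d i) / (1 - v i) = (N : ℝ) := by
  simpa only [Fintype.card_fin] using isotonic_regression_normalizes_weights_general
    ⟨hmono, hmin⟩ (fun i ↦ (hv0 i).ne') fun i ↦ (hv1 i).ne
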